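/- (2-variable orientation-activity expansion for oriented matroid perspectives, realizable case.) For every vector configuration v : Fin n → V, every linear map π : V →ₗ[ℝ] W with v' = π ∘ v, and all real numbers x, y: t(M,M'; 2x, 2y, 1) = ∑_{A ⊆ Fin n} x^{o*_{M'}(A)} · y^{o_M(A)}, where o*_{M'}(A) is the number of elements dually orientation-active for v'_A and o_M(A) is the number of elements orientation-active for v_A. -/

import Mathlib

open Set Submodule

/-- The reorientation of the vector configuration `v` on the subset `A`:
vectors indexed by `A` are negated. -/
def reorient {n : ℕ} {V : Type*} [AddCommGroup V] (v : Fin n → V) (A : Finset (Fin n)) :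
    Fin n → V :=
  fun i => if i ∈ A then -v i else v i

/-- `a` is orientation-active for the configuration `w`: it is the smallest element of a
positive circuit, i.e. there is a nonnegative linear dependence with positive coefficient
at `a` and zero coefficients below `a`. -/
def OActive {n : ℕ} {V : Type*} [AddCommGroup V] [Module ℝ V]
    (w : Fin n → V) (a : Fin n) : Prop :=
  ∃ c : Fin n → ℝ, (∀ i, 0 ≤ c i) ∧ (∑ i, c i • w i) = 0 ∧ 0 < c a ∧ ∀ i < a, c i = 0

/-- `a` is dually orientation-active for the configuration `w`: it is the smallest element of
a positive cocircuit, i.e. there is a linear functional, nonnegative on the configuration,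
positive at `w a` and vanishing on the vectors below `a`. -/
def ODualActive {n : ℕ} {V : Type*} [AddCommGroup V] [Module ℝ V]
    (w : Fin n → V) (a : Fin n) : Prop :=
  ∃ f : V →ₗ[ℝ] ℝ, (∀ i, 0 ≤ f (w i)) ∧ 0 < f (w a) ∧ ∀ i < a, f (w i) = 0

/-- `θ*(A)`: the number of elements outside `A` that are dually orientation-active for `v_A`. -/
noncomputable def thetaStar {n : ℕ} {V : Type*} [AddCommGroup V] [Module ℝ V]
    (v : Fin n → V) (A : Finset (Fin n)) : ℕ :=
  {a : Fin n | a ∉ A ∧ ODualActive (reorient v A) a}.ncard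

/-- `θ̄*(A)`: the number of elements of `A` that are dually orientation-active for `v_A`. -/
noncomputable def thetaStarBar {n : ℕ} {V : Type*} [AddCommGroup V] [Module ℝ V]
    (v : Fin n → V) (A : Finset (Fin n)) : ℕ :=
  {a : Fin n | a ∈ A ∧ ODualActive (reorient v A) a}.ncard

/-- `θ(A)`: the number of elements outside `A` that are orientation-active for `v_A`. -/
noncomputable def theta {n : ℕ} {V : Type*} [AddCommGroup V] [Module ℝ V]
    (v : Fin n → V) (A : Finset (Fin n)) : ℕ :=
  {a : Fin n | a ∉ A ∧ OActive (reorient v A) a}.ncard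

/-- `θ̄(A)`: the number of elements of `A` that are orientation-active for `v_A`. -/
noncomputable def thetaBar {n : ℕ} {V : Type*} [AddCommGroup V] [Module ℝ V]
    (v : Fin n → V) (A : Finset (Fin n)) : ℕ :=
  {a : Fin n | a ∈ A ∧ OActive (reorient v A) a}.ncard

/-- The rank of a set of indices: the dimension of the span of the corresponding vectors. -/
noncomputable def vrank {n : ℕ} {V : Type*} [AddCommGroup V] [Module ℝ V]
    (v : Fin n → V) (S : Set (Fin n)) : ℕ :=
  Module.finrank ℝ ↥(span ℝ (v '' S))

/-- The Tutte polynomial of the matroid realized by the configuration `v`: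
`t(x,y) = ∑_{A ⊆ Fin n} (x-1)^(r(E) - r(A)) * (y-1)^(|A| - r(A))`. -/
noncomputable def tutteV {n : ℕ} {V : Type*} [AddCommGroup V] [Module ℝ V]
    (v : Fin n → V) (x y : ℝ) : ℝ :=
  ∑ A : Finset (Fin n),
    (x - 1) ^ (vrank v Set.univ - vrank v ↑A) * (y - 1) ^ (A.card - vrank v ↑A)

/-- The evaluation at `z = 1` of the 3-variable Tutte polynomial of the oriented matroid
perspective realized by the configurations `v` (for `M`) and `v'` (for `M'`):
`t(M,M';x,y,1) = ∑_{A ⊆ Fin n} (x-1)^(r'(E) - r'(A)) * (y-1)^(|A| - r(A))`. -/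
noncomputable def tuttePerspV {n : ℕ} {V W : Type*} [AddCommGroup V] [Module ℝ V]
    [AddCommGroup W] [Module ℝ W] (v : Fin n → V) (v' : Fin n → W) (x y : ℝ) : ℝ :=
  ∑ A : Finset (Fin n),
    (x - 1) ^ (vrank v' Set.univ - vrank v' ↑A) * (y - 1) ^ (A.card - vrank v ↑A)

/-- `o(A)`: the number of orientation-active elements for the reorientation `v_A`. -/
noncomputable def oCount {n : ℕ} {V : Type*} [AddCommGroup V] [Module ℝ V]
    (v : Fin n → V) (A : Finset (Fin n)) : ℕ :=
  {a : Fin n | OActive (reorient v A) a}.ncard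

/-- `o*(A)`: the number of dually orientation-active elements for the reorientation `v_A`. -/
noncomputable def oStarCount {n : ℕ} {V : Type*} [AddCommGroup V] [Module ℝ V]
    (v : Fin n → V) (A : Finset (Fin n)) : ℕ :=
  {a : Fin n | ODualActive (reorient v A) a}.ncard


/-- `z` is a nonnegative combination of the `w i`, `i ≥ a`, with positive coefficient at `a`. -/
def PosComb {n : ℕ} {V : Type*} [AddCommGroup V] [Module ℝ V]
    (w : Fin n → V) (z : V) (a : Fin n) : Prop :=
  ∃ c : Fin n → ℝ, (∀ i, 0 ≤ c i) ∧ (∑ i, c i • w i) = z ∧ 0 < c a ∧ ∀ i < a, c i = 0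

/-- `f` witnesses that `a` is dually active. -/
def PosFun {n : ℕ} {V : Type*} [AddCommGroup V] [Module ℝ V]
    (w : Fin n → V) (f : V →ₗ[ℝ] ℝ) (a : Fin n) : Prop :=
  (∀ i, 0 ≤ f (w i)) ∧ 0 < f (w a) ∧ ∀ i < a, f (w i) = 0

section core
variable {n : ℕ} {V W : Type*} [AddCommGroup V] [Module ℝ V] [AddCommGroup W] [Module ℝ W]

theorem PosComb.add {w : Fin n → V} {z₁ z₂ : V} {a b : Fin n} (h₁ : PosComb w z₁ a)
    (h₂ : PosComb w z₂ b) (hab : a ≤ b) : PosComb w (z₁ + z₂) a := by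
  obtain ⟨c, c0, cs, ca, cl⟩ := h₁
  obtain ⟨d, d0, ds, da, dl⟩ := h₂
  refine ⟨fun i => c i + d i, fun i => add_nonneg (c0 i) (d0 i), ?_, ?_, ?_⟩
  · simp [add_smul, Finset.sum_add_distrib, cs, ds]
  · exact add_pos_of_pos_of_nonneg ca (d0 a)
  · intro i hi
    simp [cl i hi, dl i (lt_of_lt_of_le hi hab)]

theorem PosComb.smul {w : Fin n → V} {z : V} {a : Fin n} (h : PosComb w z a) {t : ℝ}
    (ht : 0 < t) : PosComb w (t • z) a := by
  obtain ⟨c, c0, cs, ca, cl⟩ := h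
  refine ⟨fun i => t * c i, fun i => mul_nonneg ht.le (c0 i), ?_, mul_pos ht ca, ?_⟩
  · simp [mul_smul, ← Finset.smul_sum, cs]
  · intro i hi
    simp [cl i hi]

theorem PosComb.cancel {w : Fin n → V} {u : V} {a b : Fin n} (h₁ : PosComb w u a)
    (h₂ : PosComb w (-u) b) : PosComb w 0 a ∨ PosComb w 0 b := by
  rcases le_total a b with h | h
  · left; simpa using h₁.add h₂ h
  · right; simpa using h₂.add h₁ h

theorem PosFun.add {w : Fin n → V} {f g : V →ₗ[ℝ] ℝ} {a b : Fin n} (h₁ : PosFun w f a)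
    (h₂ : PosFun w g b) (hab : a ≤ b) : PosFun w (f + g) a := by
  obtain ⟨c0, ca, cl⟩ := h₁
  obtain ⟨d0, da, dl⟩ := h₂
  refine ⟨fun i => add_nonneg (c0 i) (d0 i), add_pos_of_pos_of_nonneg ca (d0 a), ?_⟩
  intro i hi
  simp [cl i hi, dl i (lt_of_lt_of_le hi hab)]

theorem PosFun.smul {w : Fin n → V} {f : V →ₗ[ℝ] ℝ} {a : Fin n} (h : PosFun w f a) {t : ℝ}
    (ht : 0 < t) : PosFun w (t • f) a := by
  obtain ⟨c0, ca, cl⟩ := h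
  refine ⟨fun i => mul_nonneg ht.le (c0 i), mul_pos ht ca, ?_⟩
  intro i hi
  simp [cl i hi]

theorem PosFun.cancel {w : Fin n → V} {u : V} {f g : V →ₗ[ℝ] ℝ} {a b : Fin n}
    (h₁ : PosFun w f a) (h₂ : PosFun w g b) (hf : 0 < f u) (hg : g u < 0) :
    (∃ f, PosFun w f a ∧ f u = 0) ∨ (∃ f, PosFun w f b ∧ f u = 0) := by
  have h₁' := h₁.smul (neg_pos.2 hg)
  have h₂' := h₂.smul hf
  rcases le_total a b with h | h
  · left; refine ⟨_, h₁'.add h₂' h, ?_⟩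
    simp; ring
  · right; refine ⟨_, h₂'.add h₁' h, ?_⟩
    simp; ring

theorem PosComb.eval_nonneg {w : Fin n → V} {u : V} {a : Fin n} (h : PosComb w u a)
    (f : V →ₗ[ℝ] ℝ) (hf : ∀ i, 0 ≤ f (w i)) : 0 ≤ f u := by
  obtain ⟨c, c0, cs, -⟩ := h
  rw [← cs, map_sum]
  exact Finset.sum_nonneg fun i _ => by simpa using mul_nonneg (c0 i) (hf i)

/-- The "plus behaves like deletion, minus like contraction" alternative. -/
def Alt (w : Fin n → V) (π : V →ₗ[ℝ] W) (u : V) : Prop :=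
  ∀ a, ((PosComb w 0 a ∨ PosComb w (-u) a) ↔ PosComb w 0 a) ∧
    ((PosComb w 0 a ∨ PosComb w u a) ↔
      (PosComb w 0 a ∨ PosComb w u a ∨ PosComb w (-u) a)) ∧
    ((∃ f, PosFun (π ∘ w) f a ∧ 0 ≤ f (π u)) ↔ ∃ f, PosFun (π ∘ w) f a) ∧
    ((∃ f, PosFun (π ∘ w) f a ∧ f (π u) ≤ 0) ↔ ∃ f, PosFun (π ∘ w) f a ∧ f (π u) = 0)

theorem alt_of_posComb (w : Fin n → V) (π : V →ₗ[ℝ] W) (u : V) (a : Fin n)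
    (h0 : ¬ PosComb w 0 a) (hu : PosComb w u a) : Alt w π u := by
  have key : ∀ f : W →ₗ[ℝ] ℝ, (∀ i, 0 ≤ f ((π ∘ w) i)) → 0 ≤ f (π u) := fun f hf =>
    hu.eval_nonneg (f.comp π) hf
  have k2 : ∀ b, PosComb w (-u) b → PosComb w 0 b := fun b hb =>
    (hu.cancel hb).resolve_left h0
  intro b
  refine ⟨⟨?_, Or.inl⟩, ⟨?_, ?_⟩, ⟨?_, ?_⟩, ⟨?_, ?_⟩⟩
  · rintro (h | h)
    exacts [h, k2 b h]
  · tauto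
  · have := k2 b; tauto
  · rintro ⟨f, hf, -⟩; exact ⟨f, hf⟩
  · rintro ⟨f, hf⟩; exact ⟨f, hf, key f hf.1⟩
  · rintro ⟨f, hf, h⟩; exact ⟨f, hf, le_antisymm h (key f hf.1)⟩
  · rintro ⟨f, hf, h⟩; exact ⟨f, hf, h.le⟩

theorem alt_or (w : Fin n → V) (π : V →ₗ[ℝ] W) (u : V) : Alt w π u ∨ Alt w π (-u) := by
  by_cases h1 : ∃ a, ¬ PosComb w 0 a ∧ PosComb w u a
  · obtain ⟨a, h0, h⟩ := h1
    exact Or.inl (alt_of_posComb w π u a h0 h)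
  by_cases h2 : ∃ a, ¬ PosComb w 0 a ∧ PosComb w (-u) a
  · obtain ⟨a, h0, h⟩ := h2
    exact Or.inr (alt_of_posComb w π (-u) a h0 h)
  push Not at h1 h2
  have h1' : ∀ a, PosComb w u a → PosComb w 0 a := fun a => by
    have := h1 a; tauto
  have h2' : ∀ a, PosComb w (-u) a → PosComb w 0 a := fun a => by
    have := h2 a; tauto
  by_cases h3 : ∃ b f, PosFun (π ∘ w) f b ∧ f (π u) < 0 ∧ ¬ ∃ f, PosFun (π ∘ w) f b ∧ f (π u) = 0
  · right
    obtain ⟨b, f, hf, hfu, hno⟩ := h3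
    have k : ∀ a g, PosFun (π ∘ w) g a → 0 < g (π u) →
        ∃ g, PosFun (π ∘ w) g a ∧ g (π u) = 0 := fun a g hg hgu =>
      (hg.cancel hf hgu hfu).resolve_right hno
    intro a
    refine ⟨?_, ?_, ⟨?_, ?_⟩, ⟨?_, ?_⟩⟩
    · rw [neg_neg]; have := h1' a; tauto
    · rw [neg_neg]; have := h1' a; have := h2' a; tauto
    · rintro ⟨f, hf, -⟩; exact ⟨f, hf⟩
    · rintro ⟨g, hg⟩
      rcases le_or_gt (g (π u)) 0 with h | h
      · exact ⟨g, hg, by simpa using h⟩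
      · obtain ⟨g', hg', h'⟩ := k a g hg h
        exact ⟨g', hg', by simp [h']⟩
    · rintro ⟨g, hg, h⟩
      rcases eq_or_lt_of_le h with h | h
      · exact ⟨g, hg, h⟩
      · obtain ⟨g', hg', h'⟩ := k a g hg (by simpa using h)
        exact ⟨g', hg', by simp [h']⟩
    · rintro ⟨f, hf, h⟩; exact ⟨f, hf, h.le⟩
  · left
    push Not at h3
    intro a
    refine ⟨?_, ?_, ⟨?_, ?_⟩, ⟨?_, ?_⟩⟩
    · have := h2' a; tauto
    · have := h1' a; have := h2' a; tauto
    · rintro ⟨f, hf, -⟩; exact ⟨f, hf⟩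
    · rintro ⟨g, hg⟩
      rcases le_or_gt 0 (g (π u)) with h | h
      · exact ⟨g, hg, h⟩
      · obtain ⟨g', hg', h'⟩ := h3 a g hg h
        exact ⟨g', hg', h'.ge⟩
    · rintro ⟨g, hg, h⟩
      rcases eq_or_lt_of_le h with h | h
      · exact ⟨g, hg, h⟩
      · exact h3 a g hg h
    · rintro ⟨f, hf, h⟩; exact ⟨f, hf, h.le⟩

/-! Activities of the extended configuration. -/

theorem oActive_iff {m : ℕ} (w : Fin m → V) (a : Fin m) : OActive w a ↔ PosComb w 0 a := Iff.rfl

theorem oDualActive_iff {m : ℕ} (w : Fin m → V) (a : Fin m) :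
    ODualActive w a ↔ ∃ f, PosFun w f a := Iff.rfl

theorem oActive_castSucc (w : Fin (n + 1) → V) (a : Fin n) :
    OActive w a.castSucc ↔ PosComb (w ∘ Fin.castSucc) 0 a ∨
      PosComb (w ∘ Fin.castSucc) (-w (Fin.last n)) a := by
  constructor
  · rintro ⟨c, c0, cs, ca, cl⟩
    rw [Fin.sum_univ_castSucc] at cs
    have hP : PosComb (w ∘ Fin.castSucc) (-(c (Fin.last n) • w (Fin.last n))) a :=
      ⟨fun i => c i.castSucc, fun i => c0 _, by simpa using eq_neg_of_add_eq_zero_left cs, ca,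
        fun i hi => cl _ (by simpa using hi)⟩
    rcases eq_or_lt_of_le (c0 (Fin.last n)) with h | h
    · left; simpa [← h] using hP
    · right
      have := hP.smul (inv_pos.2 h)
      rwa [smul_neg, smul_smul, inv_mul_cancel₀ h.ne', one_smul] at this
  · have aux : ∀ t : ℝ, 0 ≤ t → PosComb (w ∘ Fin.castSucc) (-(t • w (Fin.last n))) a →
        OActive w a.castSucc := by
      rintro t ht ⟨c, c0, cs, ca, cl⟩
      refine ⟨Fin.snoc c t, ?_, ?_, by simpa using ca, ?_⟩
      · intro i
        refine Fin.lastCases ?_ (fun i => ?_) i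
        · simpa using ht
        · simpa using c0 i
      · rw [Fin.sum_univ_castSucc]
        simp only [Fin.snoc_castSucc, Fin.snoc_last]
        simp only [Function.comp_apply] at cs
        rw [cs]; simp
      · intro i
        refine Fin.lastCases ?_ (fun i => ?_) i
        · intro h; exact absurd h (by simpa using Fin.le_last _)
        · intro h; simpa using cl i (by simpa using h)
    rintro (h | h)
    · exact aux 0 le_rfl (by simpa using h)
    · exact aux 1 zero_le_one (by simpa using h)

theorem oActive_last (w : Fin (n + 1) → V) : OActive w (Fin.last n) ↔ w (Fin.last n) = 0 := by
  constructor
  · rintro ⟨c, c0, cs, ca, cl⟩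
    rw [Fin.sum_univ_castSucc, Finset.sum_eq_zero] at cs
    · rw [zero_add] at cs
      exact (smul_eq_zero.1 cs).resolve_left ca.ne'
    · intro i _
      rw [cl _ (Fin.castSucc_lt_last i), zero_smul]
  · intro h
    refine ⟨Pi.single (Fin.last n) 1, ?_, ?_, by simp, ?_⟩
    · intro i; by_cases hi : i = Fin.last n
      · subst hi; simp
      · simp [hi]
    · rw [Fin.sum_univ_castSucc]; simp [h]
    · intro i hi; simp [hi.ne]

theorem oDualActive_castSucc (w : Fin (n + 1) → V) (a : Fin n) :
    ODualActive w a.castSucc ↔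
      ∃ f, PosFun (w ∘ Fin.castSucc) f a ∧ 0 ≤ f (w (Fin.last n)) := by
  constructor
  · rintro ⟨f, f0, fa, fl⟩
    exact ⟨f, ⟨fun i => f0 _, fa, fun i hi => fl _ (by simpa using hi)⟩, f0 _⟩
  · rintro ⟨f, ⟨f0, fa, fl⟩, fu⟩
    refine ⟨f, ?_, fa, ?_⟩
    · intro i
      refine Fin.lastCases fu (fun i => f0 i) i
    · intro i
      refine Fin.lastCases ?_ (fun i => ?_) i
      · intro h; exact absurd h (by simpa using Fin.le_last _)
      · intro h; exact fl i (by simpa using h)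

theorem oDualActive_last (w : Fin (n + 1) → V) : ODualActive w (Fin.last n) ↔
    w (Fin.last n) ∉ span ℝ (Set.range (w ∘ Fin.castSucc)) := by
  constructor
  · rintro ⟨f, f0, fa, fl⟩ hmem
    have : span ℝ (Set.range (w ∘ Fin.castSucc)) ≤ LinearMap.ker f := by
      rw [span_le]
      rintro _ ⟨i, rfl⟩
      exact fl _ (Fin.castSucc_lt_last i)
    exact fa.ne' (this hmem)
  · intro h
    obtain ⟨f, hf, hle⟩ := Submodule.exists_le_ker_of_notMem h
    have hz : ∀ i : Fin n, f (w i.castSucc) = 0 := fun i => hle (subset_span ⟨i, rfl⟩)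
    refine ⟨f (w (Fin.last n)) • f, ?_, ?_, ?_⟩
    · intro i
      refine Fin.lastCases ?_ (fun i => ?_) i
      · exact mul_self_nonneg _
      · simp [hz]
    · exact mul_self_pos.2 hf
    · intro i
      refine Fin.lastCases ?_ (fun i => ?_) i
      · intro h; exact absurd h (lt_irrefl _)
      · intro h; simp [hz]

/-! Activities of the contracted configuration. -/

theorem oActive_quot (w : Fin n → V) (u : V) (a : Fin n) :
    OActive ((span ℝ {u}).mkQ ∘ w) a ↔
      PosComb w 0 a ∨ PosComb w u a ∨ PosComb w (-u) a := by
  have hmk : ∀ c : Fin n → ℝ, ∑ i, c i • ((span ℝ {u}).mkQ ∘ w) i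
      = (span ℝ {u}).mkQ (∑ i, c i • w i) := by
    intro c; simp [map_sum]
  constructor
  · rintro ⟨c, c0, cs, ca, cl⟩
    rw [hmk, Submodule.mkQ_apply, Submodule.Quotient.mk_eq_zero, mem_span_singleton] at cs
    obtain ⟨t, ht⟩ := cs
    have hP : PosComb w (t • u) a := ⟨c, c0, ht.symm, ca, cl⟩
    rcases lt_trichotomy t 0 with h | h | h
    · right; right
      have := hP.smul (inv_pos.2 (neg_pos.2 h))
      rwa [smul_smul, inv_neg, neg_mul, inv_mul_cancel₀ h.ne, neg_smul, one_smul] at this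
    · left; simpa [h] using hP
    · right; left
      have := hP.smul (inv_pos.2 h)
      rwa [smul_smul, inv_mul_cancel₀ h.ne', one_smul] at this
  · have aux : ∀ z, z ∈ span ℝ {u} → PosComb w z a → OActive ((span ℝ {u}).mkQ ∘ w) a := by
      rintro z hz ⟨c, c0, cs, ca, cl⟩
      refine ⟨c, c0, ?_, ca, cl⟩
      rw [hmk, cs, Submodule.mkQ_apply, Submodule.Quotient.mk_eq_zero]
      exact hz
    rintro (h | h | h)
    · exact aux 0 (zero_mem _) h
    · exact aux u (mem_span_singleton_self u) h
    · exact aux (-u) (neg_mem (mem_span_singleton_self u)) h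

theorem oDualActive_quot (w : Fin n → V) (u : V) (a : Fin n) :
    ODualActive ((span ℝ {u}).mkQ ∘ w) a ↔ ∃ f, PosFun w f a ∧ f u = 0 := by
  constructor
  · rintro ⟨f, f0, fa, fl⟩
    refine ⟨f.comp (span ℝ {u}).mkQ, ⟨f0, fa, fl⟩, ?_⟩
    have : (span ℝ {u}).mkQ u = 0 := by
      rw [Submodule.mkQ_apply, Submodule.Quotient.mk_eq_zero]
      exact mem_span_singleton_self u
    rw [LinearMap.comp_apply, this, map_zero]
  · rintro ⟨f, ⟨f0, fa, fl⟩, fu⟩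
    have hle : span ℝ {u} ≤ LinearMap.ker f := by
      rw [span_le]; rintro _ rfl; exact fu
    refine ⟨(span ℝ {u}).liftQ f hle, ?_, ?_, ?_⟩
    · intro i; simpa using f0 i
    · simpa using fa
    · intro i hi; simpa using fl i hi
end core

section counting
set_option linter.unusedSectionVars false
variable {n : ℕ} {V W : Type*} [AddCommGroup V] [Module ℝ V] [AddCommGroup W] [Module ℝ W]

open Classical in
theorem ncard_succ (P : Fin (n + 1) → Prop) :
    {a | P a}.ncard = {a : Fin n | P a.castSucc}.ncard + if P (Fin.last n) then 1 else 0 := by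
  have himg : ({a : Fin n | P a.castSucc}.image Fin.castSucc).ncard
      = {a : Fin n | P a.castSucc}.ncard :=
    Set.ncard_image_of_injective _ (Fin.castSucc_injective n)
  rw [← himg]
  split_ifs with h
  · rw [← Set.ncard_insert_of_notMem (a := Fin.last n)]
    · congr 1
      ext a
      refine Fin.lastCases ?_ (fun i => ?_) a
      · simp [h]
      · simp
    · rintro ⟨i, -, hi⟩
      exact absurd hi (Fin.castSucc_lt_last i).ne
  · rw [add_zero]
    congr 1
    ext a
    refine Fin.lastCases ?_ (fun i => ?_) a
    · simp [h]
    · simp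

/-- The term of the activity expansion. -/
noncomputable def actTerm (x y : ℝ) (w : Fin n → V) (w' : Fin n → W) : ℝ :=
  x ^ {a | ODualActive w' a}.ncard * y ^ {a | OActive w a}.ncard

open Classical in
theorem actTerm_succ (x y : ℝ) (p : Fin (n + 1) → V) (p' : Fin (n + 1) → W) :
    actTerm x y p p' =
      (x ^ (if p' (Fin.last n) ∉ span ℝ (Set.range (p' ∘ Fin.castSucc)) then 1 else 0) *
        y ^ (if p (Fin.last n) = 0 then 1 else 0)) *
      (x ^ {a : Fin n | ODualActive p' a.castSucc}.ncard *
        y ^ {a : Fin n | OActive p a.castSucc}.ncard) := by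
  unfold actTerm
  rw [ncard_succ, ncard_succ (fun a => OActive p a), pow_add, pow_add]
  simp only [oDualActive_last, oActive_last]
  ring

open Classical in
theorem actTerm_pair_aux (x y : ℝ) (p q : Fin (n + 1) → V) (π : V →ₗ[ℝ] W)
    (hpq : q ∘ Fin.castSucc = p ∘ Fin.castSucc) (hl : q (Fin.last n) = - p (Fin.last n))
    (hA : Alt (p ∘ Fin.castSucc) π (p (Fin.last n))) :
    actTerm x y p (π ∘ p) + actTerm x y q (π ∘ q) =
      (x ^ (if (π ∘ p) (Fin.last n) ∉ span ℝ (Set.range ((π ∘ p) ∘ Fin.castSucc)) then 1 else 0) *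
        y ^ (if p (Fin.last n) = 0 then 1 else 0)) *
      (actTerm x y (p ∘ Fin.castSucc) (π ∘ p ∘ Fin.castSucc) +
        actTerm x y ((span ℝ {p (Fin.last n)}).mkQ ∘ p ∘ Fin.castSucc)
          ((span ℝ {π (p (Fin.last n))}).mkQ ∘ π ∘ p ∘ Fin.castSucc)) := by
  have hpq' : (π ∘ q) ∘ Fin.castSucc = (π ∘ p) ∘ Fin.castSucc := by
    rw [Function.comp_assoc, hpq, Function.comp_assoc]
  rw [actTerm_succ x y p, actTerm_succ x y q, hpq', mul_add]
  have e1 : ((π ∘ q) (Fin.last n) ∈ span ℝ (Set.range ((π ∘ p) ∘ Fin.castSucc))) ↔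
      ((π ∘ p) (Fin.last n) ∈ span ℝ (Set.range ((π ∘ p) ∘ Fin.castSucc))) := by
    simp only [Function.comp_apply, hl, map_neg, neg_mem_iff]
  have e2 : q (Fin.last n) = 0 ↔ p (Fin.last n) = 0 := by rw [hl, neg_eq_zero]
  simp only [e1, e2]
  unfold actTerm
  simp only [oActive_castSucc, oDualActive_castSucc, oActive_quot, oDualActive_quot, hpq, hpq', hl]
  congr 5
  · ext a; simpa [oDualActive_iff, Function.comp_assoc] using (hA a).2.2.1
  · ext a; simpa [oActive_iff] using (hA a).1
  · ext a
    simpa [hl, Function.comp_assoc] using (hA a).2.2.2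
  · ext a; simpa using (hA a).2.1

open Classical in
theorem actTerm_pair (x y : ℝ) (p q : Fin (n + 1) → V) (π : V →ₗ[ℝ] W)
    (hpq : q ∘ Fin.castSucc = p ∘ Fin.castSucc) (hl : q (Fin.last n) = - p (Fin.last n)) :
    actTerm x y p (π ∘ p) + actTerm x y q (π ∘ q) =
      (x ^ (if (π ∘ p) (Fin.last n) ∉ span ℝ (Set.range ((π ∘ p) ∘ Fin.castSucc)) then 1 else 0) *
        y ^ (if p (Fin.last n) = 0 then 1 else 0)) *
      (actTerm x y (p ∘ Fin.castSucc) (π ∘ p ∘ Fin.castSucc) +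
        actTerm x y ((span ℝ {p (Fin.last n)}).mkQ ∘ p ∘ Fin.castSucc)
          ((span ℝ {π (p (Fin.last n))}).mkQ ∘ π ∘ p ∘ Fin.castSucc)) := by
  rcases alt_or (p ∘ Fin.castSucc) π (p (Fin.last n)) with h | h
  · exact actTerm_pair_aux x y p q π hpq hl h
  · have hpq' : (π ∘ q) ∘ Fin.castSucc = (π ∘ p) ∘ Fin.castSucc := by
      rw [Function.comp_assoc, hpq, Function.comp_assoc]
    rw [← hl, ← hpq] at h
    rw [add_comm, actTerm_pair_aux x y q p π hpq.symm (by rw [hl, neg_neg]) h, hpq', hpq]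
    have e1 : ((π ∘ q) (Fin.last n) ∈ span ℝ (Set.range ((π ∘ p) ∘ Fin.castSucc))) ↔
        ((π ∘ p) (Fin.last n) ∈ span ℝ (Set.range ((π ∘ p) ∘ Fin.castSucc))) := by
      simp only [Function.comp_apply, hl, map_neg, neg_mem_iff]
    have e2 : q (Fin.last n) = 0 ↔ p (Fin.last n) = 0 := by rw [hl, neg_eq_zero]
    simp only [e1, e2]
    congr 2
    unfold actTerm
    simp only [oActive_quot, oDualActive_quot, hl, map_neg, neg_eq_zero, neg_neg]
    congr 3
    ext a
    simp only [Set.mem_ofPred_eq]; tauto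

/-- The right-hand side of the expansion. -/
noncomputable def actSum (x y : ℝ) (v : Fin n → V) (v' : Fin n → W) : ℝ :=
  ∑ A : Finset (Fin n), actTerm x y (reorient v A) (reorient v' A)

theorem reorient_comp (π : V →ₗ[ℝ] W) (v : Fin n → V) (A : Finset (Fin n)) :
    reorient (π ∘ v) A = π ∘ reorient v A := by
  funext i
  simp only [reorient, Function.comp_apply]
  split_ifs <;> simp

theorem span_range_reorient (v : Fin n → V) (A : Finset (Fin n)) :
    span ℝ (Set.range (reorient v A)) = span ℝ (Set.range v) := by
  apply le_antisymm
  · rw [span_le]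
    rintro _ ⟨i, rfl⟩
    have : v i ∈ span ℝ (Set.range v) := subset_span ⟨i, rfl⟩
    simp only [reorient]
    split_ifs
    · exact neg_mem this
    · exact this
  · rw [span_le]
    rintro _ ⟨i, rfl⟩
    have : reorient v A i ∈ span ℝ (Set.range (reorient v A)) := subset_span ⟨i, rfl⟩
    simp only [reorient] at this
    split_ifs at this
    · exact neg_mem_iff.1 this
    · exact this

theorem sum_finset_succ (F : Finset (Fin (n + 1)) → ℝ) :
    ∑ A, F A = ∑ B : Finset (Fin n), (F (B.map Fin.castSuccEmb) +
      F (insert (Fin.last n) (B.map Fin.castSuccEmb))) := by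
  have hu : (Finset.univ : Finset (Fin (n + 1))) =
      insert (Fin.last n) ((Finset.univ : Finset (Fin n)).map Fin.castSuccEmb) := by
    ext a
    refine Fin.lastCases ?_ (fun i => ?_) a <;> simp
  have hnot : Fin.last n ∉ (Finset.univ : Finset (Fin n)).map Fin.castSuccEmb := by
    simp [Fin.castSucc_ne_last]
  rw [← Finset.powerset_univ, hu, Finset.sum_powerset_insert hnot, Finset.sum_add_distrib]
  have hp : ∀ G : Finset (Fin (n + 1)) → ℝ,
      ∑ t ∈ ((Finset.univ : Finset (Fin n)).map Fin.castSuccEmb).powerset, G t =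
        ∑ B : Finset (Fin n), G (B.map Fin.castSuccEmb) := by
    intro G
    symm
    apply Finset.sum_bij (fun B _ => B.map Fin.castSuccEmb)
    · intro B _
      simp
    · intro B _ C _ h
      exact Finset.map_injective _ h
    · intro t ht
      rw [Finset.mem_powerset, Finset.subset_map_iff] at ht
      obtain ⟨B, -, rfl⟩ := ht
      exact ⟨B, Finset.mem_univ _, rfl⟩
    · intros; rfl
  rw [hp, hp (fun t => F (insert (Fin.last n) t))]

theorem reorient_map_castSucc (v : Fin (n + 1) → V) (B : Finset (Fin n)) :
    reorient v (B.map Fin.castSuccEmb) ∘ Fin.castSucc = reorient (v ∘ Fin.castSucc) B := by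
  funext i; simp [reorient]

theorem reorient_insert_castSucc (v : Fin (n + 1) → V) (B : Finset (Fin n)) :
    reorient v (insert (Fin.last n) (B.map Fin.castSuccEmb)) ∘ Fin.castSucc =
      reorient (v ∘ Fin.castSucc) B := by
  funext i; simp [reorient, Fin.castSucc_ne_last]

theorem reorient_map_last (v : Fin (n + 1) → V) (B : Finset (Fin n)) :
    reorient v (B.map Fin.castSuccEmb) (Fin.last n) = v (Fin.last n) := by
  simp [reorient, Fin.castSucc_ne_last]

theorem reorient_insert_last (v : Fin (n + 1) → V) (B : Finset (Fin n)) :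
    reorient v (insert (Fin.last n) (B.map Fin.castSuccEmb)) (Fin.last n) = -v (Fin.last n) := by
  simp [reorient]

open Classical in
theorem actSum_succ (x y : ℝ) (v : Fin (n + 1) → V) (π : V →ₗ[ℝ] W) :
    actSum x y v (π ∘ v) =
      (x ^ (if π (v (Fin.last n)) ∉ span ℝ (Set.range (π ∘ v ∘ Fin.castSucc)) then 1 else 0) *
        y ^ (if v (Fin.last n) = 0 then 1 else 0)) *
      (actSum x y (v ∘ Fin.castSucc) (π ∘ v ∘ Fin.castSucc) +
        actSum x y ((span ℝ {v (Fin.last n)}).mkQ ∘ v ∘ Fin.castSucc)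
          ((span ℝ {π (v (Fin.last n))}).mkQ ∘ π ∘ v ∘ Fin.castSucc)) := by
  unfold actSum
  rw [sum_finset_succ, ← Finset.sum_add_distrib, Finset.mul_sum]
  refine Finset.sum_congr rfl fun B _ => ?_
  rw [reorient_comp, reorient_comp, actTerm_pair x y _ _ π
    (by rw [reorient_map_castSucc, reorient_insert_castSucc])
    (by rw [reorient_map_last, reorient_insert_last])]
  simp only [Function.comp_assoc, reorient_map_castSucc]
  simp only [Function.comp_apply, reorient_map_last, reorient_comp]
  rw [← reorient_comp, span_range_reorient, reorient_map_last]

theorem actSum_loop (x y : ℝ) (w : Fin n → V) (π : V →ₗ[ℝ] W) (u : V) (hu : u = 0) :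
    actSum x y ((span ℝ {u}).mkQ ∘ w) ((span ℝ {π u}).mkQ ∘ π ∘ w) = actSum x y w (π ∘ w) := by
  unfold actSum actTerm
  refine Finset.sum_congr rfl fun B _ => ?_
  simp only [reorient_comp, oActive_quot, oDualActive_quot, hu]
  simp [oActive_iff, oDualActive_iff]

theorem actSum_isthmus (x y : ℝ) (w : Fin n → V) (π : V →ₗ[ℝ] W) (u : V)
    (hu : π u ∉ span ℝ (Set.range (π ∘ w))) :
    actSum x y ((span ℝ {u}).mkQ ∘ w) ((span ℝ {π u}).mkQ ∘ π ∘ w) = actSum x y w (π ∘ w) := by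
  unfold actSum actTerm
  refine Finset.sum_congr rfl fun B _ => ?_
  rw [← span_range_reorient _ B] at hu
  simp only [reorient_comp, oActive_quot, oDualActive_quot] at hu ⊢
  set p := reorient w B
  obtain ⟨g, hg, hle⟩ := Submodule.exists_le_ker_of_notMem hu
  have hz : ∀ i : Fin n, g (π (p i)) = 0 := fun i => hle (subset_span ⟨i, rfl⟩)
  have hno : ∀ a z, PosComb p z a → π z ∈ span ℝ (Set.range (π ∘ p)) := by
    rintro a z ⟨c, -, cs, -⟩
    rw [← cs, map_sum]
    refine sum_mem fun i _ => ?_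
    rw [map_smul]
    exact smul_mem _ _ (subset_span ⟨i, rfl⟩)
  have h1 : ∀ a, ¬ PosComb p u a := fun a h => hu (hno a u h)
  have h2 : ∀ a, ¬ PosComb p (-u) a := fun a h => hu (by simpa using hno a _ h)
  congr 3
  · ext a
    constructor
    · rintro ⟨f, hf, -⟩; exact ⟨f, hf⟩
    · rintro ⟨f, hf⟩
      refine ⟨f - (f (π u) / g (π u)) • g, ?_, ?_⟩
      · have e : ∀ i, (f - (f (π u) / g (π u)) • g) ((π ∘ p) i) = f ((π ∘ p) i) := by
          intro i; simp [hz]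
        unfold PosFun
        simp only [e]
        exact hf
      · simp [hg]
  · ext a
    simp [h1, h2, oActive_iff]
end counting

section ranks
set_option linter.unusedSectionVars false
variable {n : ℕ} {V W : Type*} [AddCommGroup V] [Module ℝ V] [FiniteDimensional ℝ V]
  [AddCommGroup W] [Module ℝ W] [FiniteDimensional ℝ W]

theorem image_map_castSucc (v : Fin (n + 1) → V) (B : Finset (Fin n)) :
    v '' ↑(B.map Fin.castSuccEmb) = (v ∘ Fin.castSucc) '' ↑B := by
  rw [Finset.coe_map, Set.image_image, Set.image_comp, Set.image_image]; rfl

theorem vrank_map (v : Fin (n + 1) → V) (B : Finset (Fin n)) :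
    vrank v ↑(B.map Fin.castSuccEmb) = vrank (v ∘ Fin.castSucc) ↑B := by
  unfold vrank
  rw [image_map_castSucc]

theorem vrank_mono (v : Fin n → V) {S T : Set (Fin n)} (h : S ⊆ T) : vrank v S ≤ vrank v T :=
  Submodule.finrank_mono (span_mono (Set.image_mono h))

theorem vrank_le_card (v : Fin n → V) (B : Finset (Fin n)) : vrank v ↑B ≤ B.card := by
  classical
  unfold vrank
  rw [← Finset.coe_image]
  exact (finrank_span_finset_le_card (B.image v)).trans Finset.card_image_le

theorem span_insert_image (v : Fin (n + 1) → V) (S : Set (Fin n)) (T : Set (Fin (n + 1)))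
    (hT : T = insert (Fin.last n) (Fin.castSucc '' S)) :
    span ℝ (v '' T) = span ℝ ((v ∘ Fin.castSucc) '' S) ⊔ span ℝ {v (Fin.last n)} := by
  rw [hT, Set.image_insert_eq, ← Set.image_comp, span_insert, sup_comm]

open Classical in
theorem vrank_univ_succ (v : Fin (n + 1) → V) :
    vrank v Set.univ = vrank (v ∘ Fin.castSucc) Set.univ +
      if v (Fin.last n) ∉ span ℝ (Set.range (v ∘ Fin.castSucc)) then 1 else 0 := by
  unfold vrank
  rw [span_insert_image v Set.univ Set.univ (by
    ext a
    refine Fin.lastCases ?_ (fun i => ?_) a <;> simp), Set.image_univ]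
  split_ifs with h
  · rw [add_zero, sup_eq_left.2]
    rw [span_singleton_le_iff_mem]
    exact h
  · rw [finrank_sup_span_singleton h]

theorem finrank_map_mkQ (K S : Submodule ℝ V) :
    Module.finrank ℝ (S.map K.mkQ) + Module.finrank ℝ K = Module.finrank ℝ ↥(S ⊔ K) := by
  have h1 := Submodule.finrank_sup_add_finrank_inf_eq S K
  have h2 := LinearMap.finrank_range_add_finrank_ker (K.mkQ.domRestrict S)
  rw [LinearMap.range_domRestrict, LinearMap.ker_domRestrict, ker_mkQ] at h2
  have h3 : Module.finrank ℝ ↥(Submodule.comap S.subtype K) = Module.finrank ℝ ↥(S ⊓ K) := by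
    rw [← Submodule.finrank_map_subtype_eq, Submodule.map_comap_subtype]
  rw [h3] at h2
  omega

open Classical in
theorem vrank_insert (v : Fin (n + 1) → V) (S : Set (Fin n)) (T : Set (Fin (n + 1)))
    (hT : T = insert (Fin.last n) (Fin.castSucc '' S)) :
    vrank v T = vrank ((span ℝ {v (Fin.last n)}).mkQ ∘ v ∘ Fin.castSucc) S +
      if v (Fin.last n) = 0 then 0 else 1 := by
  unfold vrank
  rw [span_insert_image v S T hT, ← finrank_map_mkQ, Set.image_comp (span ℝ {_}).mkQ, span_image]
  congr 1
  split_ifs with h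
  · rw [h]; simp
  · exact finrank_span_singleton h

open Classical in
theorem tutte_succ (x y : ℝ) (v : Fin (n + 1) → V) (v' : Fin (n + 1) → W) :
    tuttePerspV v v' x y =
      (x - 1) ^ (if v' (Fin.last n) ∉ span ℝ (Set.range (v' ∘ Fin.castSucc)) then 1 else 0) *
        tuttePerspV (v ∘ Fin.castSucc) (v' ∘ Fin.castSucc) x y +
      (y - 1) ^ (if v (Fin.last n) = 0 then 1 else 0) *
        tuttePerspV ((span ℝ {v (Fin.last n)}).mkQ ∘ v ∘ Fin.castSucc)
          ((span ℝ {v' (Fin.last n)}).mkQ ∘ v' ∘ Fin.castSucc) x y := by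
  unfold tuttePerspV
  rw [sum_finset_succ, Finset.sum_add_distrib, Finset.mul_sum, Finset.mul_sum]
  congr 1
  · refine Finset.sum_congr rfl fun B _ => ?_
    rw [vrank_map, vrank_map, Finset.card_map, ← mul_assoc, ← pow_add, vrank_univ_succ v']
    congr 2
    have := vrank_mono (v' ∘ Fin.castSucc) (Set.subset_univ (B : Set (Fin n)))
    omega
  · refine Finset.sum_congr rfl fun B _ => ?_
    have hT : ((insert (Fin.last n) (B.map Fin.castSuccEmb) : Finset (Fin (n + 1))) :
        Set (Fin (n + 1))) = insert (Fin.last n) (Fin.castSucc '' (B : Set (Fin n))) := by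
      simp
    have hU : (Set.univ : Set (Fin (n + 1))) = insert (Fin.last n) (Fin.castSucc '' Set.univ) := by
      ext a
      refine Fin.lastCases ?_ (fun i => ?_) a <;> simp
    rw [vrank_insert v _ _ hT, vrank_insert v' _ _ hT, vrank_insert v' _ _ hU,
      Finset.card_insert_of_notMem (by simp [Fin.castSucc_ne_last]), Finset.card_map,
      mul_left_comm, ← pow_add]
    have := vrank_le_card ((span ℝ {v (Fin.last n)}).mkQ ∘ v ∘ Fin.castSucc) B
    congr 2
    · omega
    · split_ifs <;> omega

end ranks

universe u₁ u₂

theorem main_aux (x y : ℝ) (n : ℕ) : ∀ (V : Type u₁) (W : Type u₂) [AddCommGroup V] [Module ℝ V]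
    [FiniteDimensional ℝ V] [AddCommGroup W] [Module ℝ W] [FiniteDimensional ℝ W]
    (v : Fin n → V) (π : V →ₗ[ℝ] W),
    tuttePerspV v (π ∘ v) (2 * x) (2 * y) = actSum x y v (π ∘ v) := by
  classical
  induction n with
  | zero =>
    intro V W _ _ _ _ _ _ v π
    have h1 : ∀ S : Set (Fin 0), vrank v S = 0 := fun S => by
      simp [vrank, Set.eq_empty_of_isEmpty S]
    have h2 : ∀ S : Set (Fin 0), vrank (π ∘ v) S = 0 := fun S => by
      simp [vrank, Set.eq_empty_of_isEmpty S]
    simp [tuttePerspV, actSum, actTerm, h1, h2, Set.eq_empty_of_isEmpty, Finset.card_eq_zero.2 (Finset.eq_empty_of_isEmpty _)]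
  | succ n ih =>
    intro V W _ _ _ _ _ _ v π
    have hle : span ℝ {v (Fin.last n)} ≤ (span ℝ {π (v (Fin.last n))}).comap π := by
      rw [span_le]
      rintro _ rfl
      exact mem_span_singleton_self _
    have ih1 := ih V W (v ∘ Fin.castSucc) π
    have ih2 := ih (V ⧸ span ℝ {v (Fin.last n)}) (W ⧸ span ℝ {π (v (Fin.last n))})
      ((span ℝ {v (Fin.last n)}).mkQ ∘ v ∘ Fin.castSucc) (Submodule.mapQ _ _ π hle)
    have hc : (Submodule.mapQ _ _ π hle) ∘ (span ℝ {v (Fin.last n)}).mkQ ∘ v ∘ Fin.castSucc =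
      (span ℝ {π (v (Fin.last n))}).mkQ ∘ π ∘ v ∘ Fin.castSucc := by
      funext i; simp
    rw [hc] at ih2
    have ht := tutte_succ (2 * x) (2 * y) v (π ∘ v)
    simp only [Function.comp_assoc] at ht
    rw [ht]
    have e : (π ∘ v) (Fin.last n) = π (v (Fin.last n)) := rfl
    rw [e, ih1, ih2, actSum_succ]
    by_cases h0 : v (Fin.last n) = 0
    · rw [actSum_loop x y _ π _ h0]
      have : π (v (Fin.last n)) ∈ span ℝ (Set.range (π ∘ v ∘ Fin.castSucc)) := by
        rw [h0, map_zero]; exact zero_mem _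
      rw [if_neg (not_not.2 this), if_pos h0]
      ring
    · by_cases h1 : π (v (Fin.last n)) ∈ span ℝ (Set.range (π ∘ v ∘ Fin.castSucc))
      · simp [h0, h1]
      · rw [actSum_isthmus x y _ π _ h1]
        simp [h0, h1]
        ring

/-- 2-variable orientation-activity expansion for oriented matroid perspectives:
`t(M,M'; 2x, 2y, 1) = ∑_A x^o*_{M'}(A) · y^o_M(A)`. -/
theorem statement14 {n : ℕ} {V W : Type*} [AddCommGroup V] [Module ℝ V] [FiniteDimensional ℝ V]
    [AddCommGroup W] [Module ℝ W] [FiniteDimensional ℝ W]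
    (v : Fin n → V) (π : V →ₗ[ℝ] W) (x y : ℝ) :
    tuttePerspV v (π ∘ v) (2 * x) (2 * y) =
      ∑ A : Finset (Fin n), x ^ oStarCount (π ∘ v) A * y ^ oCount v A := by
  rw [main_aux x y n V W v π]
  rfl
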